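/- Let d be a natural number, let W ⊆ ℝ × ℝ^d be an open set, and let x' : ℝ × ℝ^d → ℝ be C^∞ on W such that: (h1) x'(x, y) ≥ 0 for every (x, y) ∈ W with x ≥ 0; (h2) for every (x, y) ∈ W with x ≥ 0 one has x'(x, y) = 0 if and only if x = 0; (h3) the Fréchet derivative of x' at each point (0, y) ∈ W is nonzero. Then there exists g : ℝ × ℝ^d → ℝ which is C^∞ on W such that x'(x, y) = x · g(x, y) for all (x, y) ∈ W, and g(x, y) > 0 for every (x, y) ∈ W with x ≥ 0. -/

import Mathlib

open Set Filter Topology in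
theorem hasFDerivAt_param {E H : Type} [NormedAddCommGroup E] [NormedSpace ℝ E]
    [FiniteDimensional ℝ E] [NormedAddCommGroup H] [NormedSpace ℝ H] [CompleteSpace H]
    (f : E × ℝ → H) (hf : ContDiff ℝ (⊤ : ℕ∞) f) (p : E) :
    HasFDerivAt (fun p => ∫ t in (0:ℝ)..1, f (p, t))
      (∫ t in (0:ℝ)..1, (fderiv ℝ f (p, t)).comp (ContinuousLinearMap.inl ℝ E ℝ)) p := by
  have hc : Continuous f := hf.continuous
  have hd : Continuous (fun q : E × ℝ =>
      (fderiv ℝ f q).comp (ContinuousLinearMap.inl ℝ E ℝ)) :=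
    (hf.continuous_fderiv (by simp)).clm_comp continuous_const
  have hK : IsCompact (Metric.closedBall p 1 ×ˢ Icc (0:ℝ) 1) :=
    (isCompact_closedBall p 1).prod isCompact_Icc
  obtain ⟨C, hC⟩ := hK.exists_bound_of_continuousOn hd.continuousOn
  refine intervalIntegral.hasFDerivAt_integral_of_dominated_of_fderiv_le
    (F := fun p t => f (p, t))
    (F' := fun p t => (fderiv ℝ f (p, t)).comp (ContinuousLinearMap.inl ℝ E ℝ))
    (bound := fun _ => C) (s := Metric.closedBall p 1)
    (Metric.closedBall_mem_nhds p one_pos) ?_ ?_ ?_ ?_ ?_ ?_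
  · exact Eventually.of_forall fun x =>
      (hc.comp (by fun_prop : Continuous fun t : ℝ => (x, t))).aestronglyMeasurable
  · exact (hc.comp (by fun_prop : Continuous fun t : ℝ => (p, t))).intervalIntegrable _ _
  · exact (hd.comp (by fun_prop : Continuous fun t : ℝ => (p, t))).aestronglyMeasurable
  · refine Eventually.of_forall fun t ht x hx => hC (x, t) ⟨hx, ?_⟩
    rw [uIoc_of_le zero_le_one] at ht
    exact Ioc_subset_Icc_self ht
  · exact intervalIntegrable_const
  · refine Eventually.of_forall fun t ht x hx => ?_
    have h := (hf.differentiable (by simp) (x, t)).hasFDerivAt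
    exact h.comp x (hasFDerivAt_prodMk_left x t)

theorem contDiff_param_nat {E : Type} [NormedAddCommGroup E] [NormedSpace ℝ E]
    [FiniteDimensional ℝ E] (n : ℕ) : ∀ {H : Type} [NormedAddCommGroup H] [NormedSpace ℝ H]
    [CompleteSpace H] (f : E × ℝ → H) (_ : ContDiff ℝ (⊤ : ℕ∞) f),
    ContDiff ℝ n (fun p => ∫ t in (0:ℝ)..1, f (p, t)) := by
  induction n with
  | zero =>
    intro H _ _ _ f hf
    refine contDiff_zero.2 (continuous_iff_continuousAt.2 fun p => ?_)
    exact (hasFDerivAt_param f hf p).continuousAt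
  | succ n ih =>
    intro H _ _ _ f hf
    refine contDiff_succ_iff_hasFDerivAt.2 ⟨_, ?_, hasFDerivAt_param f hf⟩
    exact ih (fun q => (fderiv ℝ f q).comp (ContinuousLinearMap.inl ℝ E ℝ))
      ((hf.fderiv_right (by simp)).clm_comp contDiff_const)

open Set Filter Topology in
theorem hadamard_global {E : Type} [NormedAddCommGroup E] [NormedSpace ℝ E]
    [FiniteDimensional ℝ E] (F : ℝ × E → ℝ) (hF : ContDiff ℝ (⊤ : ℕ∞) F) :
    ∃ G : ℝ × E → ℝ, ContDiff ℝ (⊤ : ℕ∞) G ∧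
      (∀ p, p.1 * G p = F p - F (0, p.2)) ∧ ∀ y, G (0, y) = fderiv ℝ F (0, y) (1, 0) := by
  have hD : ContDiff ℝ (⊤ : ℕ∞) (fun q : (ℝ × E) × ℝ =>
      fderiv ℝ F (q.2 * q.1.1, q.1.2) ((1 : ℝ), (0 : E))) := by
    have h1 : ContDiff ℝ (⊤ : ℕ∞) (fderiv ℝ F) := hF.fderiv_right (by simp)
    exact (h1.comp (by fun_prop : ContDiff ℝ (⊤ : ℕ∞)
      (fun q : (ℝ × E) × ℝ => (q.2 * q.1.1, q.1.2)))).clm_apply contDiff_const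
  refine ⟨fun p => ∫ t in (0:ℝ)..1, fderiv ℝ F (t * p.1, p.2) ((1 : ℝ), (0 : E)), ?_, ?_, ?_⟩
  · exact contDiff_infty.2 fun n => contDiff_param_nat n _ hD
  · rintro ⟨x, y⟩
    have hder : ∀ t ∈ uIcc (0:ℝ) 1, HasDerivAt (fun t : ℝ => F (t * x, y))
        (x * fderiv ℝ F (t * x, y) ((1 : ℝ), (0 : E))) t := by
      intro t _
      have h := (hF.differentiable (by simp) (t * x, y)).hasFDerivAt
      have h' : HasDerivAt (fun t : ℝ => (t * x, y)) (x, (0 : E)) t := by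
        simpa using ((hasDerivAt_id t).mul_const x).prodMk (hasDerivAt_const t y)
      have h2 := h.comp_hasDerivAt t h'
      have e : ((x, 0) : ℝ × E) = x • ((1 : ℝ), (0 : E)) := by simp
      rw [e, map_smul, smul_eq_mul] at h2
      exact h2
    have hcont : Continuous fun t : ℝ => x * fderiv ℝ F (t * x, y) ((1 : ℝ), (0 : E)) :=
      continuous_const.mul (hD.continuous.comp
        (by fun_prop : Continuous fun t : ℝ => ((x, y), t)))
    have := intervalIntegral.integral_eq_sub_of_hasDerivAt hder (hcont.intervalIntegrable _ _)
    rw [intervalIntegral.integral_const_mul] at this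
    simpa using this
  · intro y
    simp

open Set Filter Topology in
theorem stmt_1 (d : ℕ) (W : Set (ℝ × (Fin d → ℝ))) (hW : IsOpen W)
    (x' : ℝ × (Fin d → ℝ) → ℝ) (hx' : ContDiffOn ℝ (⊤ : ℕ∞) x' W)
    (h1 : ∀ p ∈ W, 0 ≤ p.1 → 0 ≤ x' p)
    (h2 : ∀ p ∈ W, 0 ≤ p.1 → (x' p = 0 ↔ p.1 = 0))
    (h3 : ∀ y : Fin d → ℝ, ((0 : ℝ), y) ∈ W → fderiv ℝ x' ((0 : ℝ), y) ≠ 0) :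
    ∃ g : ℝ × (Fin d → ℝ) → ℝ, ContDiffOn ℝ (⊤ : ℕ∞) g W ∧
      (∀ p ∈ W, x' p = p.1 * g p) ∧ (∀ p ∈ W, 0 ≤ p.1 → 0 < g p) := by
  classical
  let g : ℝ × (Fin d → ℝ) → ℝ := fun p =>
    if p.1 = 0 then fderiv ℝ x' p (1, 0) else x' p / p.1
  have hz : ∀ p ∈ W, p.1 = 0 → x' p = 0 := fun p hp h0 => (h2 p hp h0.ge).2 h0
  have hmul : ∀ p ∈ W, x' p = p.1 * g p := by
    intro p hp
    by_cases h0 : p.1 = 0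
    · rw [hz p hp h0, h0, zero_mul]
    · simp only [g, if_neg h0]
      field_simp
  have hgA : ∀ p ∈ W, ContDiffAt ℝ (⊤ : ℕ∞) g p := by
    intro p hp
    have hxp : ContDiffAt ℝ (⊤ : ℕ∞) x' p := hx'.contDiffAt (hW.mem_nhds hp)
    by_cases h0 : p.1 = 0
    · obtain ⟨x, y⟩ := p
      obtain rfl : x = 0 := h0
      obtain ⟨r, hr, hrW⟩ := Metric.nhds_basis_closedBall.mem_iff.1 (hW.mem_nhds hp)
      let φ : ContDiffBump ((0 : ℝ), y) := ⟨r / 2, r, by positivity, by linarith⟩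
      let F : ℝ × (Fin d → ℝ) → ℝ := fun q => φ q * x' q
      have hF : ContDiff ℝ (⊤ : ℕ∞) F := by
        refine contDiff_iff_contDiffAt.2 fun q => ?_
        by_cases hq : q ∈ tsupport φ
        · have hqW : q ∈ W := by
            rw [φ.tsupport_eq] at hq
            exact hrW hq
          exact φ.contDiffAt.mul (hx'.contDiffAt (hW.mem_nhds hqW))
        · have h : F =ᶠ[𝓝 q] fun _ => 0 := by
            filter_upwards [notMem_tsupport_iff_eventuallyEq.1 hq] with z hz
            simp [F, hz]
          exact contDiffAt_const.congr_of_eventuallyEq h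
      have hFx : F =ᶠ[𝓝 ((0 : ℝ), y)] x' := by
        filter_upwards [φ.eventuallyEq_one] with z hz
        simp [F, hz]
      obtain ⟨G, hG, hG1, hG2⟩ := hadamard_global F hF
      refine hG.contDiffAt.congr_of_eventuallyEq ?_
      have hpi : Tendsto (fun q : ℝ × (Fin d → ℝ) => ((0 : ℝ), q.2)) (𝓝 (0, y))
          (𝓝 (0, y)) := by
        have : Continuous (fun q : ℝ × (Fin d → ℝ) => ((0 : ℝ), q.2)) := by fun_prop
        exact this.tendsto (0, y)
      filter_upwards [hFx.eventuallyEq_nhds, hpi.eventually hFx,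
        hpi.eventually (hW.mem_nhds hp)] with q hq1 hq2 hq3
      by_cases hq0 : q.1 = 0
      · obtain ⟨a, b⟩ := q
        obtain rfl : a = 0 := hq0
        simp only [g, if_true, hG2]
        rw [hq1.fderiv_eq]
      · have e := hG1 q
        rw [hq1.eq_of_nhds, hq2, hz _ hq3 rfl, sub_zero] at e
        simp only [g, if_neg hq0, ← e]
        field_simp
    · have hne : ∀ᶠ q : ℝ × (Fin d → ℝ) in 𝓝 p, q.1 ≠ 0 :=
        continuous_fst.continuousAt.eventually_ne h0
      refine (hxp.div contDiffAt_fst h0).congr_of_eventuallyEq ?_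
      filter_upwards [hne] with q hq
      simp [g, hq]
  have hpos : ∀ p ∈ W, 0 < p.1 → 0 < g p := by
    intro p hp h
    have hx : 0 < x' p := lt_of_le_of_ne (h1 p hp h.le)
      fun e => h.ne' ((h2 p hp h.le).1 e.symm)
    rw [hmul p hp] at hx
    exact (mul_pos_iff_of_pos_left h).1 hx
  refine ⟨g, fun p hp => (hgA p hp).contDiffWithinAt, hmul, ?_⟩
  intro p hp h
  rcases h.lt_or_eq with h | h
  · exact hpos p hp h
  obtain ⟨x, y⟩ := p
  obtain rfl : x = 0 := h.symm
  refine lt_of_le_of_ne ?_ ?_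
  · have hc : Tendsto (fun t : ℝ => (t, y)) (𝓝[>] 0) (𝓝 ((0 : ℝ), y)) := by
      have : Continuous (fun t : ℝ => (t, y)) := by fun_prop
      exact (this.tendsto 0).mono_left nhdsWithin_le_nhds
    refine ge_of_tendsto ((hgA _ hp).continuousAt.tendsto.comp hc) ?_
    filter_upwards [hc.eventually (hW.mem_nhds hp), self_mem_nhdsWithin] with t ht ht0
    exact (hpos _ ht ht0).le
  · intro h0
    apply h3 y hp
    have hE : x' =ᶠ[𝓝 ((0 : ℝ), y)] fun q => q.1 * g q := by
      filter_upwards [hW.mem_nhds hp] with q hq using hmul q hq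
    have hd := (hasFDerivAt_fst (𝕜 := ℝ) (p := ((0 : ℝ), y))).mul
      ((hgA _ hp).differentiableAt (by simp)).hasFDerivAt
    rw [hE.fderiv_eq]
    refine hd.fderiv.trans ?_
    simp [← h0]
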